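/- Let Ω⁻, Ω⁺ ⊆ ℝ^d be open convex sets, let c ∈ C²(Ω⁻ × Ω⁺) be an infinitesimally twisted cost, and let μ⁻, μ⁺ be probability measures compactly supported in Ω⁻, Ω⁺ with densities in L^∞ with respect to Lebesgue measure. Then there exists a constant m ≥ 0 such that for every ε > 0: v_ε ≥ v_0 + (d/2)·ε·log(1/ε) − m·ε. -/

import Mathlib

open MeasureTheory Real Set Filter Classical
open scoped ENNReal NNReal Topology

noncomputable section

/-- Relative entropy (Kullback–Leibler divergence) `Ent(γ | q)`, with values in `EReal`:
it equals `∫ ρ log ρ dq` if `γ = ρ·q` (with `ρ log ρ` integrable) and `+∞` otherwise. -/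
def Ent {α : Type*} [MeasurableSpace α] (γ q : Measure α) : EReal :=
  if γ ≪ q ∧ Integrable (fun x => ((γ.rnDeriv q) x).toReal * Real.log ((γ.rnDeriv q) x).toReal) q
  then ((∫ x, ((γ.rnDeriv q) x).toReal * Real.log ((γ.rnDeriv q) x).toReal ∂q : ℝ) : EReal)
  else ⊤

/-- Entropic optimal transport cost
`v_ε = inf { ∫ c dγ + ε Ent(γ | μ⁻ ⊗ μ⁺) : γ coupling of μ⁻ and μ⁺ }`. -/
def entCost {α β : Type*} [MeasurableSpace α] [MeasurableSpace β]
    (μm : Measure α) (μp : Measure β) (c : α × β → ℝ) (ε : ℝ) : EReal :=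
  sInf {v : EReal | ∃ γ : Measure (α × β), IsProbabilityMeasure γ ∧ γ.fst = μm ∧ γ.snd = μp ∧
    v = ((∫ p, c p ∂γ : ℝ) : EReal) + (ε : EReal) * Ent γ (μm.prod μp)}

/-- The cross second derivative matrix `∇²ₓᵧ c(x,y) = (∂²c/∂xᵢ∂yⱼ)ᵢⱼ`. -/
def crossDeriv {d : ℕ} (c : EuclideanSpace ℝ (Fin d) × EuclideanSpace ℝ (Fin d) → ℝ)
    (x y : EuclideanSpace ℝ (Fin d)) : Matrix (Fin d) (Fin d) ℝ :=
  Matrix.of fun i j =>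
    fderiv ℝ (fun y' => fderiv ℝ (fun x' => c (x', y')) x (EuclideanSpace.single i 1)) y
      (EuclideanSpace.single j 1)

/-!
Gibbs' variational principle, applied to the slack `c - φ ⊕ ψ` of potentials that are almost optimal
for the Kantorovich dual problem, bounds `v₀ - v_ε` by `ε log ∫ exp (-(c - φ ⊕ ψ) / ε) d(μ⁻ ⊗ μ⁺)`
up to an arbitrarily small error, so it is enough to bound this Laplace integral by `C ε ^ (d / 2)`
with `C` independent of the potentials. These have no uniform regularity, but do not enter the cross
difference of the slack `D`, which is that of `c`. If `A` inverts the transpose of `∇²ₓᵧ c (p)`,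
then for two points near `p` with `x - x' = A (y - y')`, since `D ≥ 0`,
`D (x, y) + D (x', y') ≥ D (x, y) - D (x, y') - D (x', y) + D (x', y') ≥ ‖y - y'‖² / 2`.
Hence on each leaf of the foliation `x = w + A y` the slack grows quadratically away from an almost
minimizer and its Laplace integral has Gaussian size; Fubini and compactness conclude.
-/

lemma integrable_of_continuousOn_of_ae_mem {Z : Type*} [TopologicalSpace Z] [T2Space Z]
    [MeasurableSpace Z] [OpensMeasurableSpace Z] {ρ : Measure Z} [IsFiniteMeasure ρ] {K : Set Z}
    (hK : IsCompact K) (hρK : ∀ᵐ z ∂ρ, z ∈ K) {f : Z → ℝ} (hf : ContinuousOn f K) :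
    Integrable f ρ := by
  rw [← Measure.restrict_eq_self_of_ae_mem hρK]
  exact hf.integrableOn_compact' hK hK.measurableSet

section EntropicDuality

variable {α β : Type*} [MeasurableSpace α] [MeasurableSpace β]

/-- `γ` is a coupling of `μ` and `ν`: its marginals are `μ` and `ν`. That `γ` is a probability
measure is not a field, since it follows from the same property of `μ`. -/
structure IsCoupling (γ : Measure (α × β)) (μ : Measure α) (ν : Measure β) : Prop where
  fst_eq : γ.fst = μ
  snd_eq : γ.snd = ν

/-- The slack `c(x, y) - φ(x) - ψ(y)` of a pair of potentials in the constraint `φ ⊕ ψ ≤ c` of the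
Kantorovich dual problem; the pair is feasible where the slack is nonnegative. -/
def dualSlack {X Y : Type*} (c : X × Y → ℝ) (φ : X → ℝ) (ψ : Y → ℝ) (z : X × Y) : ℝ :=
  c z - φ z.1 - ψ z.2

namespace IsCoupling

variable {γ : Measure (α × β)} {μ : Measure α} {ν : Measure β}

lemma isProbabilityMeasure [IsProbabilityMeasure μ] (h : IsCoupling γ μ ν) :
    IsProbabilityMeasure γ :=
  ⟨by rw [← Measure.fst_univ, h.fst_eq, measure_univ]⟩

lemma prod (μ : Measure α) (ν : Measure β) [IsProbabilityMeasure μ] [IsProbabilityMeasure ν] :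
    IsCoupling (μ.prod ν) μ ν :=
  ⟨Measure.fst_prod, Measure.snd_prod⟩

lemma map {α' β' : Type*} [MeasurableSpace α'] [MeasurableSpace β'] (h : IsCoupling γ μ ν)
    {f : α → α'} {g : β → β'} (hf : Measurable f) (hg : Measurable g) :
    IsCoupling (γ.map (Prod.map f g)) (μ.map f) (ν.map g) where
  fst_eq := by
    rw [← h.fst_eq, Measure.fst, Measure.fst, Measure.map_map measurable_fst (hf.prodMap hg),
      Measure.map_map hf measurable_fst]
    rfl
  snd_eq := by
    rw [← h.snd_eq, Measure.snd, Measure.snd, Measure.map_map measurable_snd (hf.prodMap hg),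
      Measure.map_map hg measurable_snd]
    rfl

lemma measurePreserving_fst (h : IsCoupling γ μ ν) : MeasurePreserving Prod.fst γ μ :=
  ⟨measurable_fst, h.fst_eq⟩

lemma measurePreserving_snd (h : IsCoupling γ μ ν) : MeasurePreserving Prod.snd γ ν :=
  ⟨measurable_snd, h.snd_eq⟩

lemma ae_mem_prod (h : IsCoupling γ μ ν) {K : Set α} {K' : Set β} (hK : ∀ᵐ x ∂μ, x ∈ K)
    (hK' : ∀ᵐ y ∂ν, y ∈ K') : ∀ᵐ z ∂γ, z ∈ K ×ˢ K' :=
  (h.measurePreserving_fst.quasiMeasurePreserving.ae hK).and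
    (h.measurePreserving_snd.quasiMeasurePreserving.ae hK')

variable {c : α × β → ℝ} {φ : α → ℝ} {ψ : β → ℝ}

lemma integrable_dualSlack (h : IsCoupling γ μ ν) (hc : Integrable c γ) (hφ : Integrable φ μ)
    (hψ : Integrable ψ ν) : Integrable (dualSlack c φ ψ) γ :=
  (hc.sub (h.measurePreserving_fst.integrable_comp_of_integrable hφ)).sub
    (h.measurePreserving_snd.integrable_comp_of_integrable hψ)

lemma integral_dualSlack (h : IsCoupling γ μ ν) (hc : Integrable c γ) (hφ : Integrable φ μ)
    (hψ : Integrable ψ ν) :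
    ∫ z, dualSlack c φ ψ z ∂γ = ∫ z, c z ∂γ - ∫ x, φ x ∂μ - ∫ y, ψ y ∂ν := by
  have hφγ : Integrable (fun z => φ z.1) γ :=
    h.measurePreserving_fst.integrable_comp_of_integrable hφ
  have hψγ : Integrable (fun z => ψ z.2) γ :=
    h.measurePreserving_snd.integrable_comp_of_integrable hψ
  have hcφγ : Integrable (fun z => c z - φ z.1) γ := hc.sub hφγ
  obtain ⟨rfl, rfl⟩ := h
  simp only [dualSlack]
  rw [integral_sub hcφγ hψγ, integral_sub hc hφγ, Measure.fst, Measure.snd,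
    integral_map measurable_fst.aemeasurable hφ.aestronglyMeasurable,
    integral_map measurable_snd.aemeasurable hψ.aestronglyMeasurable]

end IsCoupling

lemma ent_eq_ite_integral_llr (γ q : Measure α) [SigmaFinite γ] [SigmaFinite q] :
    Ent γ q = if γ ≪ q ∧ Integrable (llr γ q) γ then ((∫ x, llr γ q x ∂γ : ℝ) : EReal) else ⊤ := by
  by_cases hγ : γ ≪ q
  · simp only [Ent, hγ, true_and, integrable_rnDeriv_mul_log_iff hγ, integral_rnDeriv_mul_log hγ]
  · simp only [Ent, hγ, false_and, if_false]

lemma integral_sub_integral_llr_le_log_integral_exp {γ q : Measure α} [IsProbabilityMeasure γ]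
    [SigmaFinite q] (hγ : γ ≪ q) (hllr : Integrable (llr γ q) γ) {f : α → ℝ}
    (hf : Integrable f γ) (hexp : Integrable (fun x => exp (f x)) q) :
    ∫ x, f x ∂γ - ∫ x, llr γ q x ∂γ ≤ log (∫ x, exp (f x) ∂q) := by
  have : NeZero q := ⟨fun hq => IsProbabilityMeasure.ne_zero γ
    (Measure.absolutelyContinuous_zero_iff.1 (hq ▸ hγ))⟩
  have : IsProbabilityMeasure (q.tilted f) := isProbabilityMeasure_tilted hexp
  have hnonneg := InformationTheory.integral_llr_add_sub_measure_univ_nonneg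
    (hγ.trans (absolutelyContinuous_tilted hexp)) (integrable_llr_tilted_right hγ hf hllr hexp)
  rw [integral_llr_tilted_right hγ hf hexp hllr] at hnonneg
  simp only [probReal_univ] at hnonneg
  linarith

variable {μ : Measure α} {ν : Measure β} [IsProbabilityMeasure μ] {c : α × β → ℝ} {ε : ℝ}

lemma entCost_zero_le_integral {γ : Measure (α × β)} (h : IsCoupling γ μ ν) :
    entCost μ ν c 0 ≤ ((∫ z, c z ∂γ : ℝ) : EReal) :=
  sInf_le ⟨γ, h.isProbabilityMeasure, h.fst_eq, h.snd_eq, by simp⟩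

variable [IsProbabilityMeasure ν]

lemma le_entCost (hε : 0 < ε) {v : EReal}
    (h : ∀ γ : Measure (α × β), IsCoupling γ μ ν → γ ≪ μ.prod ν →
      Integrable (llr γ (μ.prod ν)) γ →
      v ≤ ((∫ z, c z ∂γ + ε * ∫ z, llr γ (μ.prod ν) z ∂γ : ℝ) : EReal)) :
    v ≤ entCost μ ν c ε := by
  refine le_sInf ?_
  rintro _ ⟨γ, _, hfst, hsnd, rfl⟩
  rw [ent_eq_ite_integral_llr]
  split_ifs with hγ
  · exact_mod_cast h γ ⟨hfst, hsnd⟩ hγ.1 hγ.2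
  · rw [EReal.coe_mul_top_of_pos hε, EReal.coe_add_top]
    exact le_top

theorem integral_add_integral_sub_mul_log_le_entCost (hε : 0 < ε)
    (hc : ∀ γ, IsCoupling γ μ ν → Integrable c γ) {φ : α → ℝ} {ψ : β → ℝ} (hφ : Integrable φ μ)
    (hψ : Integrable ψ ν)
    (hexp : Integrable (fun z => exp (-dualSlack c φ ψ z / ε)) (μ.prod ν)) :
    ((∫ x, φ x ∂μ + ∫ y, ψ y ∂ν
        - ε * log (∫ z, exp (-dualSlack c φ ψ z / ε) ∂(μ.prod ν)) : ℝ) : EReal)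
      ≤ entCost μ ν c ε := by
  refine le_entCost hε fun γ hγ hac hllr => EReal.coe_le_coe_iff.2 ?_
  have := hγ.isProbabilityMeasure
  have hgibbs := integral_sub_integral_llr_le_log_integral_exp hac hllr
    ((hγ.integrable_dualSlack (hc γ hγ) hφ hψ).neg.div_const ε) hexp
  simp only [Pi.neg_apply] at hgibbs
  rw [integral_div, integral_neg, hγ.integral_dualSlack (hc γ hγ) hφ hψ] at hgibbs
  have := mul_le_mul_of_nonneg_left hgibbs hε.le
  rw [mul_sub, mul_div_cancel₀ _ hε.ne'] at this
  linarith

end EntropicDuality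

section KantorovichDuality

section FunctionalAnalysis

lemma exists_linearMap_apply_eq_forall_le_of_sublinear {V : Type*} [AddCommGroup V] [Module ℝ V]
    {N : V → ℝ} (N_hom : ∀ t : ℝ, 0 < t → ∀ v, N (t • v) = t * N v)
    (N_add : ∀ v w, N (v + w) ≤ N v + N w) (v : V) :
    ∃ L : V →ₗ[ℝ] ℝ, L v = N v ∧ ∀ w, L w ≤ N w := by
  have N_zero : N 0 = 0 := by
    have := N_hom 2 two_pos 0
    rw [smul_zero] at this
    linarith
  have mul_le : ∀ t : ℝ, t * N v ≤ N (t • v) := fun t => by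
    rcases lt_trichotomy t 0 with ht | rfl | ht
    · have := N_add (t • v) ((-t) • v)
      rw [← add_smul, add_neg_cancel, zero_smul, N_zero, N_hom _ (neg_pos.2 ht)] at this
      linarith
    · simp [N_zero]
    · exact (N_hom t ht v).ge
  have well_defined : ∀ t : ℝ, t • v = 0 → RingHom.id ℝ t • N v = 0 := fun t htv => by
    rcases smul_eq_zero.1 htv with rfl | rfl
    · exact zero_smul ℝ _
    · rw [N_zero, smul_zero]
  obtain ⟨L, hL, hLN⟩ := exists_extension_of_le_sublinear
    (LinearPMap.mkSpanSingleton' v (N v) well_defined) N N_hom N_add <| by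
      rintro ⟨w, hw⟩
      obtain ⟨t, rfl⟩ := Submodule.mem_span_singleton.1 hw
      exact (LinearPMap.mkSpanSingleton'_apply ..).trans_le (mul_le t)
  exact ⟨L, (hL ⟨v, Submodule.mem_span_singleton_self v⟩).trans
    (LinearPMap.mkSpanSingleton'_apply_self ..), hLN⟩

open CompactlySupportedContinuousMap in
lemma exists_measure_forall_integral_eq_of_nonneg {Z : Type*} [TopologicalSpace Z] [CompactSpace Z]
    [T2Space Z] [MeasurableSpace Z] [BorelSpace Z] (L : C(Z, ℝ) →ₗ[ℝ] ℝ)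
    (hL : ∀ f : C(Z, ℝ), (∀ z, 0 ≤ f z) → 0 ≤ L f) :
    ∃ γ : Measure Z, IsFiniteMeasure γ ∧ ∀ f : C(Z, ℝ), ∫ z, f z ∂γ = L f := by
  let L' : CompactlySupportedContinuousMap Z ℝ →ₗ[ℝ] ℝ :=
    { toFun f := L f.toContinuousMap
      map_add' f g := L.map_add f.toContinuousMap g.toContinuousMap
      map_smul' t f := L.map_smul t f.toContinuousMap }
  let Λ := PositiveLinearMap.mk₀ L' fun f hf => hL f.toContinuousMap hf
  exact ⟨RealRMK.rieszMeasure Λ, inferInstance,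
    fun f => RealRMK.integral_rieszMeasure Λ (continuousMapEquiv f)⟩

lemma measure_eq_of_forall_integral_le {Ω : Type*} [MeasurableSpace Ω] [TopologicalSpace Ω]
    [HasOuterApproxClosed Ω] [BorelSpace Ω] {μ₁ μ₂ : Measure Ω} [IsFiniteMeasure μ₁]
    [IsFiniteMeasure μ₂] (h : ∀ f : C(Ω, ℝ), ∫ x, f x ∂μ₁ ≤ ∫ x, f x ∂μ₂) : μ₁ = μ₂ := by
  refine ext_of_forall_integral_eq_of_IsFiniteMeasure fun f => (h f).antisymm ?_
  simpa [integral_neg] using h (-f)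

end FunctionalAnalysis

variable {X Y : Type*} [TopologicalSpace X] [TopologicalSpace Y] [MeasurableSpace X]
  [MeasurableSpace Y]

/-- The infimum of `∫ φ ∂μ + ∫ ψ ∂ν` over the pairs of continuous potentials with `f ≤ φ ⊕ ψ`. As a
function of `f` it is sublinear, and it is minus the value of the Kantorovich dual problem with
cost `-f`. -/
def majorantCost (μ : Measure X) (ν : Measure Y) (f : C(X × Y, ℝ)) : ℝ :=
  ⨅ p : {p : C(X, ℝ) × C(Y, ℝ) // ∀ z, f z ≤ p.1 z.1 + p.2 z.2},
    (∫ x, p.1.1 x ∂μ + ∫ y, p.1.2 y ∂ν)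

section CompactSpace

variable [CompactSpace X] [CompactSpace Y]

instance nonempty_majorants (f : C(X × Y, ℝ)) :
    Nonempty {p : C(X, ℝ) × C(Y, ℝ) // ∀ z, f z ≤ p.1 z.1 + p.2 z.2} :=
  ⟨⟨(.const X ‖f‖, 0), fun z => by simpa using (le_abs_self _).trans (f.norm_coe_le_norm z)⟩⟩

variable {μ : Measure X} {ν : Measure Y}

lemma le_majorantCost {f : C(X × Y, ℝ)} {a : ℝ}
    (h : ∀ (φ : C(X, ℝ)) (ψ : C(Y, ℝ)), (∀ z, f z ≤ φ z.1 + ψ z.2) →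
      a ≤ ∫ x, φ x ∂μ + ∫ y, ψ y ∂ν) :
    a ≤ majorantCost μ ν f :=
  le_ciInf fun p => h p.1.1 p.1.2 p.2

lemma exists_majorant_lt_of_majorantCost_lt {f : C(X × Y, ℝ)} {a : ℝ}
    (h : majorantCost μ ν f < a) :
    ∃ (φ : C(X, ℝ)) (ψ : C(Y, ℝ)), (∀ z, f z ≤ φ z.1 + ψ z.2) ∧
      ∫ x, φ x ∂μ + ∫ y, ψ y ∂ν < a := by
  obtain ⟨⟨⟨φ, ψ⟩, hf⟩, hlt⟩ := exists_lt_of_ciInf_lt h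
  exact ⟨φ, ψ, hf, hlt⟩

variable [BorelSpace X] [BorelSpace Y] [BorelSpace (X × Y)] [IsProbabilityMeasure μ]
  [IsProbabilityMeasure ν]

lemma integrable_continuousMap {Z : Type*} [TopologicalSpace Z] [CompactSpace Z]
    [MeasurableSpace Z] [OpensMeasurableSpace Z] {ρ : Measure Z} [IsFiniteMeasure ρ] (f : C(Z, ℝ)) :
    Integrable f ρ :=
  f.continuous.integrable_of_hasCompactSupport (.of_compactSpace f)

lemma integral_prod_le_of_le_add {f : C(X × Y, ℝ)} {φ : C(X, ℝ)} {ψ : C(Y, ℝ)}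
    (h : ∀ z, f z ≤ φ z.1 + ψ z.2) :
    ∫ z, f z ∂(μ.prod ν) ≤ ∫ x, φ x ∂μ + ∫ y, ψ y ∂ν := by
  have hφ : Integrable (fun z : X × Y => φ z.1) (μ.prod ν) :=
    (integrable_continuousMap φ).comp_fst ν
  have hψ : Integrable (fun z : X × Y => ψ z.2) (μ.prod ν) :=
    (integrable_continuousMap ψ).comp_snd μ
  calc ∫ z, f z ∂(μ.prod ν) ≤ ∫ z, (φ z.1 + ψ z.2) ∂(μ.prod ν) :=
        integral_mono (integrable_continuousMap f) (hφ.add hψ) h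
    _ = ∫ x, φ x ∂μ + ∫ y, ψ y ∂ν := by
        rw [integral_add hφ hψ, integral_fun_fst, integral_fun_snd]
        simp only [probReal_univ, one_smul]

lemma majorantCost_le {f : C(X × Y, ℝ)} {φ : C(X, ℝ)} {ψ : C(Y, ℝ)}
    (h : ∀ z, f z ≤ φ z.1 + ψ z.2) :
    majorantCost μ ν f ≤ ∫ x, φ x ∂μ + ∫ y, ψ y ∂ν :=
  ciInf_le (f := fun p : {p : C(X, ℝ) × C(Y, ℝ) // ∀ z, f z ≤ p.1 z.1 + p.2 z.2} =>
      ∫ x, p.1.1 x ∂μ + ∫ y, p.1.2 y ∂ν)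
    ⟨∫ z, f z ∂(μ.prod ν), by rintro _ ⟨p, rfl⟩; exact integral_prod_le_of_le_add p.2⟩
    ⟨(φ, ψ), h⟩

lemma majorantCost_smul {t : ℝ} (ht : 0 < t) (f : C(X × Y, ℝ)) :
    majorantCost μ ν (t • f) = t * majorantCost μ ν f := by
  have smul_le : ∀ {s : ℝ}, 0 < s → ∀ g : C(X × Y, ℝ),
      majorantCost μ ν (s • g) ≤ s * majorantCost μ ν g := fun {s} hs g => by
    rw [← div_le_iff₀' hs]
    refine le_majorantCost fun φ ψ h => ?_
    rw [div_le_iff₀' hs, mul_add, ← integral_const_mul, ← integral_const_mul]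
    refine majorantCost_le (φ := s • φ) (ψ := s • ψ) fun z => ?_
    simpa [mul_add] using mul_le_mul_of_nonneg_left (h z) hs.le
  refine (smul_le ht f).antisymm ?_
  have := smul_le (inv_pos.2 ht) (t • f)
  rwa [inv_smul_smul₀ ht.ne', ← div_eq_inv_mul, le_div_iff₀' ht] at this

lemma majorantCost_add_le (f g : C(X × Y, ℝ)) :
    majorantCost μ ν (f + g) ≤ majorantCost μ ν f + majorantCost μ ν g := by
  rw [← sub_le_iff_le_add]
  refine le_majorantCost fun φ ψ hf => ?_
  rw [sub_le_comm]
  refine le_majorantCost fun φ' ψ' hg => ?_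
  rw [sub_le_iff_le_add', add_add_add_comm,
    ← integral_add (integrable_continuousMap φ) (integrable_continuousMap φ'),
    ← integral_add (integrable_continuousMap ψ) (integrable_continuousMap ψ')]
  refine majorantCost_le (φ := φ + φ') (ψ := ψ + ψ') fun z => ?_
  simpa only [ContinuousMap.add_apply, add_add_add_comm] using add_le_add (hf z) (hg z)

variable [T2Space X] [T2Space Y] [HasOuterApproxClosed X] [HasOuterApproxClosed Y]

-- Hahn–Banach supports the sublinear functional `majorantCost μ ν` at `-c`; a supporting linear
-- functional is a measure by Riesz, and testing it on `±φ ⊕ 0` and `0 ⊕ ±ψ` gives its marginals.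
theorem exists_coupling_forall_exists_potentials_of_compactSpace (μ : Measure X) (ν : Measure Y)
    [IsProbabilityMeasure μ] [IsProbabilityMeasure ν] (c : C(X × Y, ℝ)) :
    ∃ γ : Measure (X × Y), IsCoupling γ μ ν ∧ ∀ δ > 0,
      ∃ (φ : C(X, ℝ)) (ψ : C(Y, ℝ)), (∀ z, 0 ≤ dualSlack c φ ψ z) ∧
        ∫ z, c z ∂γ ≤ ∫ x, φ x ∂μ + ∫ y, ψ y ∂ν + δ := by
  obtain ⟨L, hLc, hL⟩ := exists_linearMap_apply_eq_forall_le_of_sublinear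
    (fun t ht => majorantCost_smul (μ := μ) (ν := ν) ht) majorantCost_add_le (-c)
  have hL_le {φ : C(X, ℝ)} {ψ : C(Y, ℝ)} {f : C(X × Y, ℝ)} (h : ∀ z, f z ≤ φ z.1 + ψ z.2) :
      L f ≤ ∫ x, φ x ∂μ + ∫ y, ψ y ∂ν := (hL f).trans (majorantCost_le h)
  obtain ⟨γ, hγ, hγL⟩ := exists_measure_forall_integral_eq_of_nonneg L fun f hf => by
    simpa using hL_le (f := -f) (φ := 0) (ψ := 0) (by simpa using hf)
  refine ⟨γ, ⟨measure_eq_of_forall_integral_le fun φ => ?_,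
    measure_eq_of_forall_integral_le fun ψ => ?_⟩, fun δ hδ => ?_⟩
  · rw [Measure.fst, integral_map (by fun_prop) φ.continuous.aestronglyMeasurable]
    simpa [← hγL] using hL_le (f := φ.comp .fst) (φ := φ) (ψ := 0) (by simp)
  · rw [Measure.snd, integral_map (by fun_prop) ψ.continuous.aestronglyMeasurable]
    simpa [← hγL] using hL_le (f := ψ.comp .snd) (φ := 0) (ψ := ψ) (by simp)
  · obtain ⟨φ, ψ, hφψ, hlt⟩ := exists_majorant_lt_of_majorantCost_lt
      (lt_add_of_pos_right (majorantCost μ ν (-c)) hδ)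
    refine ⟨-φ, -ψ, fun z => ?_, ?_⟩
    · have := hφψ z
      simp only [dualSlack, ContinuousMap.neg_apply] at this ⊢
      linarith
    · rw [← hLc, map_neg, ← hγL] at hlt
      simp only [ContinuousMap.neg_apply, integral_neg]
      linarith

end CompactSpace

section CompactSet

lemma exists_isProbabilityMeasure_map_subtype_coe_eq {α : Type*} [MeasurableSpace α]
    {μ : Measure α} [IsProbabilityMeasure μ] {K : Set α} (hK : MeasurableSet K)
    (hμK : ∀ᵐ x ∂μ, x ∈ K) :
    ∃ μ' : Measure K, IsProbabilityMeasure μ' ∧ μ'.map (↑) = μ :=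
  ⟨μ.comap (↑), (MeasurableEmbedding.subtype_coe hK).isProbabilityMeasure_comap (by simpa),
    by rw [map_comap_subtype_coe hK, Measure.restrict_eq_self_of_ae_mem hμK]⟩

theorem exists_coupling_forall_exists_potentials {X Y : Type*} [MetricSpace X] [MetricSpace Y]
    [MeasurableSpace X] [MeasurableSpace Y] [BorelSpace X] [BorelSpace Y] {μ : Measure X}
    {ν : Measure Y} [IsProbabilityMeasure μ] [IsProbabilityMeasure ν]
    {K : Set X} {K' : Set Y} (hK : IsCompact K) (hK' : IsCompact K') (hμK : ∀ᵐ x ∂μ, x ∈ K)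
    (hνK' : ∀ᵐ y ∂ν, y ∈ K') {c : X × Y → ℝ} (hc : ContinuousOn c (K ×ˢ K')) :
    ∃ γ : Measure (X × Y), IsCoupling γ μ ν ∧ ∀ δ > 0,
      ∃ (φ : C(X, ℝ)) (ψ : C(Y, ℝ)), (∀ z ∈ K ×ˢ K', 0 ≤ dualSlack c φ ψ z) ∧
        ∫ z, c z ∂γ ≤ ∫ x, φ x ∂μ + ∫ y, ψ y ∂ν + δ := by
  have := isCompact_iff_compactSpace.1 hK
  have := isCompact_iff_compactSpace.1 hK'
  have hKemb := MeasurableEmbedding.subtype_coe hK.measurableSet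
  have hK'emb := MeasurableEmbedding.subtype_coe hK'.measurableSet
  obtain ⟨μ, _, rfl⟩ := exists_isProbabilityMeasure_map_subtype_coe_eq hK.measurableSet hμK
  obtain ⟨ν, _, rfl⟩ := exists_isProbabilityMeasure_map_subtype_coe_eq hK'.measurableSet hνK'
  have hcK : Continuous fun z : K × K' => c (z.1, z.2) :=
    hc.comp_continuous (continuous_subtype_val.prodMap continuous_subtype_val)
      fun z => ⟨z.1.2, z.2.2⟩
  obtain ⟨γ, hγ, hγδ⟩ := exists_coupling_forall_exists_potentials_of_compactSpace μ ν ⟨_, hcK⟩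
  refine ⟨_, hγ.map measurable_subtype_coe measurable_subtype_coe, fun δ hδ => ?_⟩
  obtain ⟨φ, ψ, hφψ, hle⟩ := hγδ δ hδ
  obtain ⟨φ, rfl⟩ := φ.exists_restrict_eq hK.isClosed
  obtain ⟨ψ, rfl⟩ := ψ.exists_restrict_eq hK'.isClosed
  refine ⟨φ, ψ, fun z hz => hφψ (⟨z.1, hz.1⟩, ⟨z.2, hz.2⟩), ?_⟩
  rw [(hKemb.prodMap hK'emb).integral_map, hKemb.integral_map, hK'emb.integral_map]
  exact hle

end CompactSet

end KantorovichDuality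

section CrossDifference

/-- The cross difference of `c` over the rectangle with corners `(x, y)` and `(x', y')`; functions
of one variable only do not contribute to it. -/
def crossDiff {X Y : Type*} (c : X × Y → ℝ) (x x' : X) (y y' : Y) : ℝ :=
  c (x, y) - c (x, y') - c (x', y) + c (x', y')

lemma crossDiff_dualSlack {X Y : Type*} (c : X × Y → ℝ) (φ : X → ℝ) (ψ : Y → ℝ) :
    crossDiff (dualSlack c φ ψ) = crossDiff c := by
  ext x x' y y'
  simp only [crossDiff, dualSlack]
  ring

variable {E F : Type*} [NormedAddCommGroup E] [NormedSpace ℝ E] [NormedAddCommGroup F]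

lemma abs_crossDiff_sub_le [NormedSpace ℝ F] {c : E × F → ℝ} {U : Set E} (hU : Convex ℝ U)
    {y y' : F} (hy : ∀ u ∈ U, DifferentiableAt ℝ c (u, y))
    (hy' : ∀ u ∈ U, DifferentiableAt ℝ c (u, y')) {L : E →L[ℝ] ℝ} {C : ℝ}
    (hC : ∀ u ∈ U, ‖(fderiv ℝ c (u, y) - fderiv ℝ c (u, y')).comp (.inl ℝ E F) - L‖ ≤ C)
    {x x' : E} (hx : x ∈ U) (hx' : x' ∈ U) :
    |crossDiff c x x' y y' - L (x - x')| ≤ C * ‖x - x'‖ := by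
  have hasFDerivAt_left {u : E} {v : F} (h : DifferentiableAt ℝ c (u, v)) :
      HasFDerivAt (fun u => c (u, v)) ((fderiv ℝ c (u, v)).comp (.inl ℝ E F)) u :=
    h.hasFDerivAt.comp u (hasFDerivAt_prodMk_left u v)
  have hmvt := hU.norm_image_sub_le_of_norm_hasFDerivWithin_le
    (f := fun u => c (u, y) - c (u, y') - L u)
    (fun u hu => (((hasFDerivAt_left (hy u hu)).sub (hasFDerivAt_left (hy' u hu))).sub
      L.hasFDerivAt).hasFDerivWithinAt)
    (fun u hu => by simpa only [ContinuousLinearMap.sub_comp] using hC u hu) hx' hx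
  convert hmvt using 1
  rw [Real.norm_eq_abs, crossDiff, map_sub]
  congr 1
  ring

/-- The mixed second derivative `∇²ₓᵧ c (p)` as a bilinear form; its first argument is the increment
of `y`. -/
def mixedFDeriv [NormedSpace ℝ F] (c : E × F → ℝ) (p : E × F) : F →L[ℝ] E →L[ℝ] ℝ :=
  (fderiv ℝ (fderiv ℝ c) p).bilinearComp (.inr ℝ E F) (.inl ℝ E F)

lemma exists_ball_abs_crossDiff_sub_mixedFDeriv_le [NormedSpace ℝ F] {c : E × F → ℝ} {p : E × F}
    (hc : ContDiffAt ℝ 2 c p) {η : ℝ} (hη : 0 < η) :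
    ∃ r > 0, ∀ x ∈ Metric.ball p.1 r, ∀ x' ∈ Metric.ball p.1 r, ∀ y ∈ Metric.ball p.2 r,
      ∀ y' ∈ Metric.ball p.2 r,
      |crossDiff c x x' y y' - mixedFDeriv c p (y - y') (x - x')| ≤
        η * ‖y - y'‖ * ‖x - x'‖ := by
  have hstrict : HasStrictFDerivAt (fderiv ℝ c) (fderiv ℝ (fderiv ℝ c) p) p :=
    (hc.fderiv_right (m := 1) (by norm_num)).hasStrictFDerivAt one_ne_zero
  have hdiff : ∀ᶠ q in 𝓝 p, DifferentiableAt ℝ c q :=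
    (hc.eventually (by simp)).mono fun q hq => hq.differentiableAt two_ne_zero
  obtain ⟨r, hr, hball⟩ := Metric.eventually_nhds_iff_ball.1
    ((hstrict.isLittleO.def hη).and (hdiff.prod_inl_nhds p))
  have mem_ball {u : E} {v v' : F} (hu : u ∈ Metric.ball p.1 r) (hv : v ∈ Metric.ball p.2 r)
      (hv' : v' ∈ Metric.ball p.2 r) : ((u, v), (u, v')) ∈ Metric.ball (p, p) r :=
    Metric.mem_ball.2 (max_lt (max_lt hu hv) (max_lt hu hv'))
  refine ⟨r, hr, fun x hx x' hx' y hy y' hy' => ?_⟩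
  refine abs_crossDiff_sub_le (convex_ball p.1 r)
    (fun u hu => (hball _ (mem_ball hu hy hy)).2)
    (fun u hu => (hball _ (mem_ball hu hy' hy')).2) (fun u hu => ?_) hx hx'
  have happrox := (hball _ (mem_ball hu hy hy')).1
  rw [Prod.mk_sub_mk, sub_self, Prod.norm_mk, norm_zero, max_eq_right (norm_nonneg _)] at happrox
  refine (ContinuousLinearMap.opNorm_comp_le
    (fderiv ℝ c (u, y) - fderiv ℝ c (u, y') - fderiv ℝ (fderiv ℝ c) p (0, y - y'))
    (.inl ℝ E F)).trans ?_
  exact (mul_le_of_le_one_right (norm_nonneg _)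
    (ContinuousLinearMap.norm_inl_le_one ℝ E F)).trans happrox

variable [InnerProductSpace ℝ F]

lemma exists_clm_forall_apply_eq_inner [FiniteDimensional ℝ E] [FiniteDimensional ℝ F]
    {B : F →L[ℝ] E →L[ℝ] ℝ} (hB : Function.Injective B) :
    ∃ A : F →L[ℝ] E, ∀ h k, B h (A k) = inner ℝ k h := by
  let B' : F →ₗ[ℝ] Module.Dual ℝ E :=
    (ContinuousLinearMap.coeLM ℝ).comp (B : F →ₗ[ℝ] E →L[ℝ] ℝ)
  have hB' : LinearMap.ker B' = ⊥ :=
    LinearMap.ker_eq_bot.2 (ContinuousLinearMap.coe_injective.comp hB)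
  obtain ⟨C, hC⟩ := B'.exists_leftInverse_of_injective hB'
  let A : F →ₗ[ℝ] E := (Module.evalEquiv ℝ E).symm ∘ₗ C.dualMap ∘ₗ innerₗ F
  refine ⟨LinearMap.toContinuousLinearMap A, fun h k => ?_⟩
  have hCB : C (B' h) = h := LinearMap.congr_fun hC h
  calc B h (A k) = C.dualMap (innerₗ F k) (B' h) :=
        Module.apply_evalEquiv_symm_apply ℝ E (B' h) (C.dualMap (innerₗ F k))
    _ = inner ℝ k h := by
        rw [LinearMap.dualMap_apply, hCB, innerₗ_apply_apply]

lemma exists_ball_norm_sub_sq_le_crossDiff {c : E × F → ℝ} {p : E × F} (hc : ContDiffAt ℝ 2 c p)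
    {A : F →L[ℝ] E} (hA : ∀ h k, mixedFDeriv c p h (A k) = inner ℝ k h) :
    ∃ r > 0, ∀ x ∈ Metric.ball p.1 r, ∀ x' ∈ Metric.ball p.1 r, ∀ y ∈ Metric.ball p.2 r,
      ∀ y' ∈ Metric.ball p.2 r, x - x' = A (y - y') →
        1 / 2 * ‖y - y'‖ ^ 2 ≤ crossDiff c x x' y y' := by
  obtain ⟨r, hr, hball⟩ := exists_ball_abs_crossDiff_sub_mixedFDeriv_le hc
    (η := (2 * (‖A‖ + 1))⁻¹) (by positivity)
  refine ⟨r, hr, fun x hx x' hx' y hy y' hy' hxy => ?_⟩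
  have happrox := hball x hx x' hx' y hy y' hy'
  rw [hxy, hA, real_inner_self_eq_norm_sq] at happrox
  have herror : (2 * (‖A‖ + 1))⁻¹ * ‖y - y'‖ * ‖A (y - y')‖ ≤ 1 / 2 * ‖y - y'‖ ^ 2 :=
    calc (2 * (‖A‖ + 1))⁻¹ * ‖y - y'‖ * ‖A (y - y')‖
        ≤ (2 * (‖A‖ + 1))⁻¹ * ‖y - y'‖ * ((‖A‖ + 1) * ‖y - y'‖) := by
          gcongr
          exact A.le_of_opNorm_le (le_add_of_nonneg_right zero_le_one) _
      _ = 1 / 2 * ‖y - y'‖ ^ 2 := by field_simp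
  linarith [(abs_le.1 happrox).1]

end CrossDifference

section CrossDeriv

variable {d : ℕ} {c : EuclideanSpace ℝ (Fin d) × EuclideanSpace ℝ (Fin d) → ℝ}
  {x y : EuclideanSpace ℝ (Fin d)}

lemma crossDeriv_apply (hc : ContDiffAt ℝ 2 c (x, y)) (i j : Fin d) :
    crossDeriv c x y i j =
      mixedFDeriv c (x, y) (EuclideanSpace.single j 1) (EuclideanSpace.single i 1) := by
  have hD : HasFDerivAt (fderiv ℝ c) (fderiv ℝ (fderiv ℝ c) (x, y)) (x, y) :=
    ((hc.fderiv_right (m := 1) (by norm_num)).differentiableAt one_ne_zero).hasFDerivAt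
  have hdiff : ∀ᶠ q in 𝓝 (x, y), DifferentiableAt ℝ c q :=
    (hc.eventually (by simp)).mono fun q hq => hq.differentiableAt two_ne_zero
  have hinner : (fun v => fderiv ℝ (fun u => c (u, v)) x (EuclideanSpace.single i 1)) =ᶠ[𝓝 y]
      fun v => fderiv ℝ c (x, v) (EuclideanSpace.single i 1, 0) := by
    filter_upwards [(Continuous.prodMk_right x).continuousAt.eventually hdiff] with v hv
    have : HasFDerivAt (fun u => c (u, v)) _ x :=
      hv.hasFDerivAt.comp x (hasFDerivAt_prodMk_left x v)
    simp [this.fderiv]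
  have houter : HasFDerivAt (fun v => fderiv ℝ c (x, v) (EuclideanSpace.single i 1, 0)) _ y :=
    (hD.comp y (hasFDerivAt_prodMk_right x y)).clm_apply (hasFDerivAt_const _ y)
  rw [crossDeriv, Matrix.of_apply, hinner.fderiv_eq, houter.fderiv]
  simp [mixedFDeriv]

lemma crossDeriv_mulVec (hc : ContDiffAt ℝ 2 c (x, y)) (h : EuclideanSpace ℝ (Fin d)) (i : Fin d) :
    (crossDeriv c x y).mulVec h i = mixedFDeriv c (x, y) h (EuclideanSpace.single i 1) := by
  have hsum : h = ∑ j, h j • EuclideanSpace.single j (1 : ℝ) := by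
    simpa using ((EuclideanSpace.basisFun (Fin d) ℝ).sum_repr h).symm
  conv_rhs => rw [hsum, map_sum, sum_apply]
  simp [Matrix.mulVec, dotProduct, crossDeriv_apply hc, mul_comm]

lemma injective_mixedFDeriv_of_det_crossDeriv_ne_zero (hc : ContDiffAt ℝ 2 c (x, y))
    (hdet : (crossDeriv c x y).det ≠ 0) : Function.Injective (mixedFDeriv c (x, y)) := by
  refine (injective_iff_map_eq_zero _).2 fun h hh => ?_
  have hmul : (crossDeriv c x y).mulVec h = 0 := by
    ext i
    rw [crossDeriv_mulVec hc, hh, zero_apply, Pi.zero_apply]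
  ext i
  exact congrFun (Matrix.eq_zero_of_mulVec_eq_zero hdet hmul) i

end CrossDeriv

section LaplaceIntegral

section Gaussian

variable {F : Type*} [NormedAddCommGroup F] [InnerProductSpace ℝ F] [FiniteDimensional ℝ F]
  [MeasurableSpace F] [BorelSpace F]

lemma lintegral_exp_neg_mul_norm_sub_sq {b : ℝ} (hb : 0 < b) (y₀ : F) :
    ∫⁻ y : F, ENNReal.ofReal (exp (-b * ‖y - y₀‖ ^ 2)) =
      ENNReal.ofReal ((π / b) ^ ((Module.finrank ℝ F : ℝ) / 2)) := by
  have hgauss := GaussianFourier.integral_rexp_neg_mul_sq_norm (V := F) hb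
  have hint : Integrable fun y : F => exp (-b * ‖y‖ ^ 2) :=
    not_imp_comm.1 integral_undef (hgauss ▸ by positivity)
  rw [lintegral_sub_right_eq_self (fun y => ENNReal.ofReal (exp (-b * ‖y‖ ^ 2))) y₀, ← hgauss,
    ofReal_integral_eq_lintegral_ofReal hint (ae_of_all _ fun _ => (exp_pos _).le)]

/-- The Gaussian size of the Laplace integral at temperature `ε` of a function that grows at least
like `κ / 2 * ‖y‖ ^ 2` from an almost minimizer; `n` is the dimension. -/
def laplaceBound (n : ℕ) (κ ε : ℝ) : ℝ≥0∞ :=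
  ENNReal.ofReal (exp (1 / 2) * (2 * π * ε / κ) ^ ((n : ℝ) / 2))

lemma setLIntegral_exp_neg_div_le {S : Set F} {G : F → ℝ} {κ ε : ℝ} (hκ : 0 < κ) (hε : 0 < ε)
    (hG : ∀ y ∈ S, 0 ≤ G y) (h : ∀ y ∈ S, ∀ y' ∈ S, κ * ‖y - y'‖ ^ 2 ≤ G y + G y') :
    ∫⁻ y in S, ENNReal.ofReal (exp (-G y / ε)) ≤ laplaceBound (Module.finrank ℝ F) κ ε := by
  rcases S.eq_empty_or_nonempty with rfl | hS
  · simp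
  obtain ⟨_, ⟨y₀, hy₀, rfl⟩, hlt⟩ := exists_lt_of_csInf_lt (hS.image G)
    (lt_add_of_pos_right (sInf (G '' S)) hε)
  have hmin : ∀ y ∈ S, G y₀ ≤ G y + ε := fun y hy =>
    hlt.le.trans (add_le_add_left (csInf_le ⟨0, forall_mem_image.2 hG⟩ (mem_image_of_mem G hy)) ε)
  have hexponent : ∀ y ∈ S, -G y / ε ≤ 1 / 2 + -(κ / (2 * ε)) * ‖y - y₀‖ ^ 2 := fun y hy => by
    have : (1 / 2 + -(κ / (2 * ε)) * ‖y - y₀‖ ^ 2) * ε = (ε - κ * ‖y - y₀‖ ^ 2) / 2 := by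
      field_simp
      ring
    rw [div_le_iff₀ hε, this]
    linarith [h y hy y₀ hy₀, hmin y hy]
  calc ∫⁻ y in S, ENNReal.ofReal (exp (-G y / ε))
      ≤ ∫⁻ y in S, ENNReal.ofReal (exp (1 / 2)) *
          ENNReal.ofReal (exp (-(κ / (2 * ε)) * ‖y - y₀‖ ^ 2)) := by
        refine setLIntegral_mono (by fun_prop) fun y hy => ?_
        rw [← ENNReal.ofReal_mul (exp_pos _).le, ← exp_add]
        gcongr
        exact hexponent y hy
    _ ≤ ∫⁻ y, ENNReal.ofReal (exp (1 / 2)) *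
          ENNReal.ofReal (exp (-(κ / (2 * ε)) * ‖y - y₀‖ ^ 2)) := setLIntegral_le_lintegral _ _
    _ = laplaceBound (Module.finrank ℝ F) κ ε := by
        rw [lintegral_const_mul' _ _ ENNReal.ofReal_ne_top,
          lintegral_exp_neg_mul_norm_sub_sq (by positivity), laplaceBound,
          ← ENNReal.ofReal_mul (exp_pos _).le]
        congr 3
        field_simp

end Gaussian

lemma setLIntegral_prod_le_mul_measure_image_fst {α β : Type*} [MeasurableSpace α]
    [MeasurableSpace β] {ρ : Measure α} {σ : Measure β} {P : Set (α × β)}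
    (hP : MeasurableSet P) {f : α × β → ℝ≥0∞} {C : ℝ≥0∞}
    (h : ∀ w, ∫⁻ y in Prod.mk w ⁻¹' P, f (w, y) ∂σ ≤ C) :
    ∫⁻ z in P, f z ∂(ρ.prod σ) ≤ C * ρ (Prod.fst '' P) := by
  calc ∫⁻ z in P, f z ∂(ρ.prod σ) = ∫⁻ z, P.indicator f z ∂(ρ.prod σ) :=
        (lintegral_indicator hP f).symm
    _ ≤ ∫⁻ w, ∫⁻ y, P.indicator f (w, y) ∂σ ∂ρ := lintegral_prod_le _
    _ ≤ ∫⁻ w, (Prod.fst '' P).indicator (fun _ => C) w ∂ρ := by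
        refine lintegral_mono fun w => ?_
        by_cases hw : w ∈ Prod.fst '' P
        · rw [indicator_of_mem hw]
          exact (lintegral_indicator (measurable_prodMk_left hP) fun y => f (w, y)).trans_le (h w)
        · have : ∀ y, (w, y) ∉ P := fun y hy => hw ⟨(w, y), hy, rfl⟩
          simp [this]
    _ ≤ C * ρ (Prod.fst '' P) := lintegral_indicator_const_le _ _

section Shear

variable {E F : Type*} [NormedAddCommGroup E] [NormedSpace ℝ E] [NormedAddCommGroup F]
  [NormedSpace ℝ F]

/-- The shear `(w, y) ↦ (w + A y, y)`, which parametrizes the leaves `x = w + A y` by `y`. -/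
def shear (A : F →L[ℝ] E) : (E × F) ≃ₜ (E × F) where
  toFun z := (z.1 + A z.2, z.2)
  invFun z := (z.1 - A z.2, z.2)
  left_inv z := by simp
  right_inv z := by simp
  continuous_toFun := by fun_prop
  continuous_invFun := by fun_prop

lemma measurePreserving_shear [MeasurableSpace E] [BorelSpace E] [MeasurableSpace F] [BorelSpace F]
    [SecondCountableTopology E] (τ : Measure E) [SFinite τ] [τ.IsAddRightInvariant]
    (σ : Measure F) [SFinite σ] (A : F →L[ℝ] E) :
    MeasurePreserving (shear A) (τ.prod σ) (τ.prod σ) := by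
  have hskew : MeasurePreserving (fun z : F × E => (z.1, z.2 + A z.1)) (σ.prod τ) (σ.prod τ) :=
    (MeasurePreserving.id σ).skew_product (by fun_prop)
      (ae_of_all _ fun y => map_add_right_eq_self τ (A y))
  exact Measure.measurePreserving_swap.comp (hskew.comp Measure.measurePreserving_swap)

lemma isBounded_image_fst_preimage_shear (A : F →L[ℝ] E) {S : Set E} {T : Set F}
    (hS : Bornology.IsBounded S) (hT : Bornology.IsBounded T) :
    Bornology.IsBounded (Prod.fst '' (shear A ⁻¹' S ×ˢ T)) := by
  refine (isBounded_sub hS (A.lipschitz.isBounded_image hT)).subset ?_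
  rintro _ ⟨⟨w, y⟩, hz, rfl⟩
  exact mem_sub.2 ⟨w + A y, hz.1, A y, mem_image_of_mem A hz.2, add_sub_cancel_right w (A y)⟩

end Shear

lemma laplaceBound_eq_mul (n : ℕ) {κ ε : ℝ} (hκ : 0 ≤ κ) (hε : 0 ≤ ε) :
    laplaceBound n κ ε = laplaceBound n κ 1 * ENNReal.ofReal (ε ^ ((n : ℝ) / 2)) := by
  rw [laplaceBound, laplaceBound, ← ENNReal.ofReal_mul (by positivity), mul_assoc (exp _),
    ← mul_rpow (by positivity) hε]
  ring_nf

variable {E F : Type*} [NormedAddCommGroup E] [NormedSpace ℝ E] [FiniteDimensional ℝ E]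
  [MeasurableSpace E] [BorelSpace E] {τ : Measure E} [τ.IsAddHaarMeasure]
  [NormedAddCommGroup F] [InnerProductSpace ℝ F] [FiniteDimensional ℝ F]
  [MeasurableSpace F] [BorelSpace F]

lemma setLIntegral_prod_exp_neg_div_le {D : E × F → ℝ} {S : Set E} {T : Set F}
    {A : F →L[ℝ] E} {κ ε : ℝ} (hκ : 0 < κ) (hε : 0 < ε) (hS : MeasurableSet S)
    (hT : MeasurableSet T) (hD : ∀ z ∈ S ×ˢ T, 0 ≤ D z)
    (hcross : ∀ x ∈ S, ∀ x' ∈ S, ∀ y ∈ T, ∀ y' ∈ T, x - x' = A (y - y') →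
      κ * ‖y - y'‖ ^ 2 ≤ crossDiff D x x' y y') :
    ∫⁻ z in S ×ˢ T, ENNReal.ofReal (exp (-D z / ε)) ∂(τ.prod volume) ≤
      laplaceBound (Module.finrank ℝ F) κ ε * τ (Prod.fst '' (shear A ⁻¹' S ×ˢ T)) := by
  rw [← (measurePreserving_shear τ volume A).setLIntegral_comp_preimage_emb
    (shear A).measurableEmbedding]
  refine setLIntegral_prod_le_mul_measure_image_fst
    ((shear A).measurable (hS.prod hT)) fun w => ?_
  refine setLIntegral_exp_neg_div_le (G := fun y => D (w + A y, y)) hκ hε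
    (fun y hy => hD _ hy) fun y hy y' hy' => ?_
  have hxy : w + A y - (w + A y') = A (y - y') := by rw [map_sub, add_sub_add_left_eq_sub]
  have hquad := hcross (w + A y) hy.1 (w + A y') hy'.1 y hy.2 y' hy'.2 hxy
  rw [crossDiff] at hquad
  have hoff : 0 ≤ D (w + A y, y') := hD _ ⟨hy.1, hy'.2⟩
  have hoff' : 0 ≤ D (w + A y', y) := hD _ ⟨hy'.1, hy.2⟩
  linarith

end LaplaceIntegral

section UniformLaplaceBound

section General

variable {X Y : Type*} [MeasurableSpace X] [MeasurableSpace Y]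

/-- The Laplace integrals of `exp (-(c - φ ⊕ ψ) / ε)` against `ρ` are `O(ε ^ (n / 2))`, uniformly in
the potentials `φ` and `ψ` with `φ ⊕ ψ ≤ c` on `s`. -/
def HasUniformLaplaceBound (n : ℕ) (c : X × Y → ℝ) (s : Set (X × Y)) (ρ : Measure (X × Y)) :
    Prop :=
  ∃ C : ℝ≥0∞, C ≠ ∞ ∧ ∀ (φ : X → ℝ) (ψ : Y → ℝ), (∀ z ∈ s, 0 ≤ dualSlack c φ ψ z) → ∀ ε > 0,
    ∫⁻ z, ENNReal.ofReal (exp (-dualSlack c φ ψ z / ε)) ∂ρ ≤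
      C * ENNReal.ofReal (ε ^ ((n : ℝ) / 2))

namespace HasUniformLaplaceBound

variable {n : ℕ} {c : X × Y → ℝ} {s : Set (X × Y)} {ρ ρ' : Measure (X × Y)}

lemma zero : HasUniformLaplaceBound n c s 0 :=
  ⟨0, ENNReal.zero_ne_top, by simp⟩

lemma mono (h : HasUniformLaplaceBound n c s ρ') (hρ : ρ ≤ ρ') : HasUniformLaplaceBound n c s ρ :=
  let ⟨C, hC, hbound⟩ := h
  ⟨C, hC, fun φ ψ hφψ ε hε => (lintegral_mono' hρ le_rfl).trans (hbound φ ψ hφψ ε hε)⟩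

lemma anti {t : Set (X × Y)} (h : HasUniformLaplaceBound n c s ρ) (hst : s ⊆ t) :
    HasUniformLaplaceBound n c t ρ :=
  let ⟨C, hC, hbound⟩ := h
  ⟨C, hC, fun φ ψ hφψ => hbound φ ψ fun z hz => hφψ z (hst hz)⟩

lemma add (h : HasUniformLaplaceBound n c s ρ) (h' : HasUniformLaplaceBound n c s ρ') :
    HasUniformLaplaceBound n c s (ρ + ρ') := by
  obtain ⟨C, hC, hbound⟩ := h
  obtain ⟨C', hC', hbound'⟩ := h'
  refine ⟨C + C', ENNReal.add_ne_top.2 ⟨hC, hC'⟩, fun φ ψ hφψ ε hε => ?_⟩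
  rw [lintegral_add_measure, add_mul]
  exact add_le_add (hbound φ ψ hφψ ε hε) (hbound' φ ψ hφψ ε hε)

lemma smul {M : ℝ≥0∞} (hM : M ≠ ∞) (h : HasUniformLaplaceBound n c s ρ) :
    HasUniformLaplaceBound n c s (M • ρ) := by
  obtain ⟨C, hC, hbound⟩ := h
  refine ⟨M * C, ENNReal.mul_ne_top hM hC, fun φ ψ hφψ ε hε => ?_⟩
  rw [lintegral_smul_measure, smul_eq_mul, mul_assoc]
  gcongr
  exact hbound φ ψ hφψ ε hε

lemma restrict_of_isCompact [TopologicalSpace X] [TopologicalSpace Y] {K : Set (X × Y)}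
    (hK : IsCompact K)
    (h : ∀ p ∈ K, ∃ t ∈ 𝓝[K] p, HasUniformLaplaceBound n c s (ρ.restrict t)) :
    HasUniformLaplaceBound n c s (ρ.restrict K) :=
  hK.induction_on (p := fun t => HasUniformLaplaceBound n c s (ρ.restrict t))
    (by rw [Measure.restrict_empty]; exact zero)
    (fun _ _ hst ht => ht.mono (Measure.restrict_mono hst le_rfl))
    (fun _ _ ht ht' => (ht.add ht').mono (Measure.restrict_union_le _ _)) h

end HasUniformLaplaceBound

end General

variable {E F : Type*} [NormedAddCommGroup E] [NormedSpace ℝ E] [FiniteDimensional ℝ E]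
  [MeasurableSpace E] [BorelSpace E] {τ : Measure E} [τ.IsAddHaarMeasure]
  [NormedAddCommGroup F] [InnerProductSpace ℝ F] [FiniteDimensional ℝ F]
  [MeasurableSpace F] [BorelSpace F] {c : E × F → ℝ} {K : Set E} {K' : Set F}

lemma hasUniformLaplaceBound_restrict_of_le_crossDiff {S : Set E} {T : Set F} {A : F →L[ℝ] E}
    {κ : ℝ} (hκ : 0 < κ) (hS : MeasurableSet S) (hT : MeasurableSet T)
    (hSb : Bornology.IsBounded S) (hTb : Bornology.IsBounded T)
    (hcross : ∀ x ∈ S, ∀ x' ∈ S, ∀ y ∈ T, ∀ y' ∈ T, x - x' = A (y - y') →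
      κ * ‖y - y'‖ ^ 2 ≤ crossDiff c x x' y y') :
    HasUniformLaplaceBound (Module.finrank ℝ F) c (S ×ˢ T)
      ((τ.prod volume).restrict (S ×ˢ T)) := by
  refine ⟨laplaceBound (Module.finrank ℝ F) κ 1 * τ (Prod.fst '' (shear A ⁻¹' S ×ˢ T)),
    ENNReal.mul_ne_top ENNReal.ofReal_ne_top
      (isBounded_image_fst_preimage_shear A hSb hTb).measure_lt_top.ne, fun φ ψ hφψ ε hε => ?_⟩
  refine (setLIntegral_prod_exp_neg_div_le (A := A) hκ hε hS hT hφψ ?_).trans_eq ?_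
  · rwa [crossDiff_dualSlack]
  · rw [laplaceBound_eq_mul _ hκ.le hε.le, mul_right_comm]

theorem hasUniformLaplaceBound_restrict_of_injective_mixedFDeriv (hK : IsCompact K)
    (hK' : IsCompact K') (hc : ∀ p ∈ K ×ˢ K', ContDiffAt ℝ 2 c p)
    (hinj : ∀ p ∈ K ×ˢ K', Function.Injective (mixedFDeriv c p)) :
    HasUniformLaplaceBound (Module.finrank ℝ F) c (K ×ˢ K')
      ((τ.prod volume).restrict (K ×ˢ K')) := by
  refine .restrict_of_isCompact (hK.prod hK') fun p hp => ?_
  obtain ⟨A, hA⟩ := exists_clm_forall_apply_eq_inner (hinj p hp)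
  obtain ⟨r, hr, hcross⟩ := exists_ball_norm_sub_sq_le_crossDiff (hc p hp) hA
  refine ⟨(K ∩ Metric.ball p.1 r) ×ˢ (K' ∩ Metric.ball p.2 r), ?_, ?_⟩
  · rw [← prod_inter_prod]
    exact inter_mem_nhdsWithin _
      (prod_mem_nhds (Metric.ball_mem_nhds p.1 hr) (Metric.ball_mem_nhds p.2 hr))
  · exact (hasUniformLaplaceBound_restrict_of_le_crossDiff one_half_pos
      (hK.measurableSet.inter measurableSet_ball) (hK'.measurableSet.inter measurableSet_ball)
      (hK.isBounded.subset inter_subset_left) (hK'.isBounded.subset inter_subset_left)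
      fun x hx x' hx' y hy y' hy' => hcross x hx.2 x' hx'.2 y hy.2 y' hy'.2).anti
        (prod_mono inter_subset_left inter_subset_left)

theorem hasUniformLaplaceBound_prod_of_injective_mixedFDeriv {μ : Measure E} {ν : Measure F}
    [SFinite μ] [SFinite ν] {M N : ℝ≥0∞} (hM : M ≠ ∞) (hN : N ≠ ∞) (hμ : μ ≤ M • τ)
    (hν : ν ≤ N • volume) (hμK : ∀ᵐ x ∂μ, x ∈ K) (hνK' : ∀ᵐ y ∂ν, y ∈ K') (hK : IsCompact K)
    (hK' : IsCompact K') (hc : ∀ p ∈ K ×ˢ K', ContDiffAt ℝ 2 c p)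
    (hinj : ∀ p ∈ K ×ˢ K', Function.Injective (mixedFDeriv c p)) :
    HasUniformLaplaceBound (Module.finrank ℝ F) c (K ×ˢ K') (μ.prod ν) := by
  refine ((hasUniformLaplaceBound_restrict_of_injective_mixedFDeriv (τ := τ) hK hK' hc hinj).smul
    (ENNReal.mul_ne_top hM hN)).mono ?_
  calc μ.prod ν = (μ.prod ν).restrict (K ×ˢ K') := by
        rw [← Measure.prod_restrict, Measure.restrict_eq_self_of_ae_mem hμK,
          Measure.restrict_eq_self_of_ae_mem hνK']
    _ ≤ ((M • τ).prod (N • volume)).restrict (K ×ˢ K') :=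
        Measure.restrict_mono le_rfl (Measure.prod_mono hμ hν)
    _ = (M * N) • (τ.prod volume).restrict (K ×ˢ K') := by
        rw [Measure.prod_smul_left, Measure.prod_smul_right, smul_smul, Measure.restrict_smul]

end UniformLaplaceBound

section EntropicLowerBound

variable {X Y : Type*} [MetricSpace X] [MetricSpace Y] [MeasurableSpace X] [MeasurableSpace Y]
  [BorelSpace X] [BorelSpace Y] [BorelSpace (X × Y)] {μ : Measure X} {ν : Measure Y}
  [IsProbabilityMeasure μ] [IsProbabilityMeasure ν] {K : Set X} {K' : Set Y} {c : X × Y → ℝ}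
  {ε B : ℝ}

lemma integral_add_integral_sub_mul_log_le_entCost_of_lintegral_le (hK : IsCompact K)
    (hK' : IsCompact K') (hμK : ∀ᵐ x ∂μ, x ∈ K) (hνK' : ∀ᵐ y ∂ν, y ∈ K')
    (hc : ContinuousOn c (K ×ˢ K')) (hε : 0 < ε) (φ : C(X, ℝ)) (ψ : C(Y, ℝ))
    (hB : ∫⁻ z, ENNReal.ofReal (exp (-dualSlack c φ ψ z / ε)) ∂(μ.prod ν) ≤ ENNReal.ofReal B) :
    ((∫ x, φ x ∂μ + ∫ y, ψ y ∂ν - ε * log B : ℝ) : EReal) ≤ entCost μ ν c ε := by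
  have hint {γ : Measure (X × Y)} (hγ : IsCoupling γ μ ν) {f : X × Y → ℝ}
      (hf : ContinuousOn f (K ×ˢ K')) : Integrable f γ :=
    have := hγ.isProbabilityMeasure
    integrable_of_continuousOn_of_ae_mem (hK.prod hK') (hγ.ae_mem_prod hμK hνK') hf
  have hexp : Integrable (fun z => exp (-dualSlack c φ ψ z / ε)) (μ.prod ν) :=
    hint (.prod μ ν) (by unfold dualSlack; fun_prop)
  have hexp_pos : 0 < ∫ z, exp (-dualSlack c φ ψ z / ε) ∂(μ.prod ν) := integral_exp_pos hexp
  have hexp_le : ∫ z, exp (-dualSlack c φ ψ z / ε) ∂(μ.prod ν) ≤ B := by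
    rw [← ofReal_integral_eq_lintegral_ofReal hexp (ae_of_all _ fun _ => (exp_pos _).le)] at hB
    exact (ENNReal.ofReal_le_ofReal_iff'.1 hB).resolve_right hexp_pos.not_ge
  refine le_trans ?_ (integral_add_integral_sub_mul_log_le_entCost hε (fun γ hγ => hint hγ hc)
    (integrable_of_continuousOn_of_ae_mem hK hμK φ.continuous.continuousOn)
    (integrable_of_continuousOn_of_ae_mem hK' hνK' ψ.continuous.continuousOn) hexp)
  norm_cast
  gcongr

theorem entCost_zero_sub_mul_log_le_entCost (hK : IsCompact K) (hK' : IsCompact K')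
    (hμK : ∀ᵐ x ∂μ, x ∈ K) (hνK' : ∀ᵐ y ∂ν, y ∈ K') (hc : ContinuousOn c (K ×ˢ K')) (hε : 0 < ε)
    (hB : ∀ (φ : C(X, ℝ)) (ψ : C(Y, ℝ)), (∀ z ∈ K ×ˢ K', 0 ≤ dualSlack c φ ψ z) →
      ∫⁻ z, ENNReal.ofReal (exp (-dualSlack c φ ψ z / ε)) ∂(μ.prod ν) ≤ ENNReal.ofReal B) :
    entCost μ ν c 0 - ((ε * log B : ℝ) : EReal) ≤ entCost μ ν c ε := by
  obtain ⟨γ, hγ, hγδ⟩ := exists_coupling_forall_exists_potentials hK hK' hμK hνK' hc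
  refine (EReal.sub_le_sub (entCost_zero_le_integral hγ) le_rfl).trans ?_
  refine EReal.ge_of_forall_gt_iff_ge.1 fun a ha => ?_
  replace ha : a < ∫ z, c z ∂γ - ε * log B := by exact_mod_cast ha
  obtain ⟨φ, ψ, hφψ, hle⟩ := hγδ _ (sub_pos.2 ha)
  refine le_trans ?_ (integral_add_integral_sub_mul_log_le_entCost_of_lintegral_le hK hK' hμK hνK'
    hc hε φ ψ (hB φ ψ hφψ))
  norm_cast
  linarith

theorem exists_entCost_zero_add_le_entCost {n : ℕ} (hK : IsCompact K) (hK' : IsCompact K')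
    (hμK : ∀ᵐ x ∂μ, x ∈ K) (hνK' : ∀ᵐ y ∂ν, y ∈ K') (hc : ContinuousOn c (K ×ˢ K'))
    (h : HasUniformLaplaceBound n c (K ×ˢ K') (μ.prod ν)) :
    ∃ m : ℝ, 0 ≤ m ∧ ∀ ε : ℝ, 0 < ε →
      entCost μ ν c 0 + (((n : ℝ) / 2 * ε * log (1 / ε) - m * ε : ℝ) : EReal) ≤
        entCost μ ν c ε := by
  obtain ⟨C, hC, hbound⟩ := h
  refine ⟨log (C.toReal + 1), log_nonneg (le_add_of_nonneg_left ENNReal.toReal_nonneg),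
    fun ε hε => ?_⟩
  have hB (φ : C(X, ℝ)) (ψ : C(Y, ℝ)) (hφψ : ∀ z ∈ K ×ˢ K', 0 ≤ dualSlack c φ ψ z) :
      ∫⁻ z, ENNReal.ofReal (exp (-dualSlack c φ ψ z / ε)) ∂(μ.prod ν) ≤
        ENNReal.ofReal ((C.toReal + 1) * ε ^ ((n : ℝ) / 2)) := by
    refine (hbound φ ψ hφψ ε hε).trans ?_
    rw [ENNReal.ofReal_mul (by positivity)]
    gcongr
    exact (ENNReal.ofReal_toReal hC).symm.trans_le (ENNReal.ofReal_le_ofReal (by simp))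
  have hlog : (n : ℝ) / 2 * ε * log (1 / ε) - log (C.toReal + 1) * ε =
      -(ε * log ((C.toReal + 1) * ε ^ ((n : ℝ) / 2))) := by
    rw [log_mul (by positivity) (by positivity), log_rpow hε, one_div, log_inv]
    ring
  rw [hlog, EReal.coe_neg, ← sub_eq_add_neg]
  exact entCost_zero_sub_mul_log_le_entCost hK hK' hμK hνK' hc hε hB

end EntropicLowerBound

lemma measure_le_smul_of_rnDeriv_le {α : Type*} [MeasurableSpace α] {μ ν : Measure α}
    [μ.HaveLebesgueDecomposition ν] (hμ : μ ≪ ν) {C : ℝ≥0∞}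
    (h : ∀ᵐ x ∂ν, μ.rnDeriv ν x ≤ C) : μ ≤ C • ν := by
  rw [← Measure.withDensity_rnDeriv_eq μ ν hμ, ← withDensity_const]
  exact withDensity_mono h

theorem entCost_lower_bound_twisted_general {d : ℕ} (Ωm Ωp : Set (EuclideanSpace ℝ (Fin d)))
    (hΩmo : IsOpen Ωm) (hΩpo : IsOpen Ωp) (μm μp : Measure (EuclideanSpace ℝ (Fin d)))
    [IsProbabilityMeasure μm] [IsProbabilityMeasure μp]
    (hsm : ∃ K, IsCompact K ∧ K ⊆ Ωm ∧ μm Kᶜ = 0)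
    (hsp : ∃ K, IsCompact K ∧ K ⊆ Ωp ∧ μp Kᶜ = 0)
    (hacm : μm ≪ volume) (hacp : μp ≪ volume)
    (hbdm : ∃ C : ℝ≥0∞, C ≠ ⊤ ∧ ∀ᵐ x ∂volume, μm.rnDeriv volume x ≤ C)
    (hbdp : ∃ C : ℝ≥0∞, C ≠ ⊤ ∧ ∀ᵐ x ∂volume, μp.rnDeriv volume x ≤ C)
    (c : EuclideanSpace ℝ (Fin d) × EuclideanSpace ℝ (Fin d) → ℝ)
    (hc : ContDiffOn ℝ 2 c (Ωm ×ˢ Ωp))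
    (htwist : ∀ x ∈ Ωm, ∀ y ∈ Ωp, (crossDeriv c x y).det ≠ 0) :
    ∃ m : ℝ, 0 ≤ m ∧ ∀ ε : ℝ, 0 < ε →
      entCost μm μp c 0 + (((d : ℝ) / 2 * ε * Real.log (1 / ε) - m * ε : ℝ) : EReal)
        ≤ entCost μm μp c ε := by
  obtain ⟨K, hK, hKΩ, hμK⟩ := hsm
  obtain ⟨K', hK', hKΩ', hνK'⟩ := hsp
  obtain ⟨M, hM, hbdm⟩ := hbdm
  obtain ⟨N, hN, hbdp⟩ := hbdp
  have hcK : ∀ p ∈ K ×ˢ K', ContDiffAt ℝ 2 c p := fun p hp =>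
    hc.contDiffAt ((hΩmo.prod hΩpo).mem_nhds (prod_mono hKΩ hKΩ' hp))
  have hinj : ∀ p ∈ K ×ˢ K', Function.Injective (mixedFDeriv c p) := fun p hp =>
    injective_mixedFDeriv_of_det_crossDeriv_ne_zero (hcK p hp)
      (htwist p.1 (hKΩ hp.1) p.2 (hKΩ' hp.2))
  have hlaplace : HasUniformLaplaceBound d c (K ×ˢ K') (μm.prod μp) := by
    simpa using hasUniformLaplaceBound_prod_of_injective_mixedFDeriv hM hN
      (measure_le_smul_of_rnDeriv_le hacm hbdm) (measure_le_smul_of_rnDeriv_le hacp hbdp)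
      (mem_ae_iff.2 hμK) (mem_ae_iff.2 hνK') hK hK' hcK hinj
  exact exists_entCost_zero_add_le_entCost hK hK' (mem_ae_iff.2 hμK) (mem_ae_iff.2 hνK')
    (hc.continuousOn.mono (prod_mono hKΩ hKΩ')) hlaplace

/-- **Lower bound for infinitesimally twisted costs**: for a `C²` infinitesimally twisted cost
on open convex sets and compactly supported marginals with `L^∞` densities,
`v_ε ≥ v₀ + (d/2) ε log(1/ε) − m ε` for all `ε > 0`. -/
theorem entCost_lower_bound_twisted {d : ℕ}
    (Ωm Ωp : Set (EuclideanSpace ℝ (Fin d)))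
    (hΩmo : IsOpen Ωm) (hΩpo : IsOpen Ωp) (hΩmc : Convex ℝ Ωm) (hΩpc : Convex ℝ Ωp)
    (μm μp : Measure (EuclideanSpace ℝ (Fin d)))
    [IsProbabilityMeasure μm] [IsProbabilityMeasure μp]
    (hsm : ∃ K, IsCompact K ∧ K ⊆ Ωm ∧ μm Kᶜ = 0)
    (hsp : ∃ K, IsCompact K ∧ K ⊆ Ωp ∧ μp Kᶜ = 0)
    (hacm : μm ≪ volume) (hacp : μp ≪ volume)
    (hbdm : ∃ C : ℝ≥0∞, C ≠ ⊤ ∧ ∀ᵐ x ∂volume, μm.rnDeriv volume x ≤ C)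
    (hbdp : ∃ C : ℝ≥0∞, C ≠ ⊤ ∧ ∀ᵐ x ∂volume, μp.rnDeriv volume x ≤ C)
    (c : EuclideanSpace ℝ (Fin d) × EuclideanSpace ℝ (Fin d) → ℝ)
    (hc : ContDiffOn ℝ 2 c (Ωm ×ˢ Ωp))
    (htwist : ∀ x ∈ Ωm, ∀ y ∈ Ωp, (crossDeriv c x y).det ≠ 0) :
    ∃ m : ℝ, 0 ≤ m ∧ ∀ ε : ℝ, 0 < ε →
      entCost μm μp c 0 + (((d : ℝ) / 2 * ε * Real.log (1 / ε) - m * ε : ℝ) : EReal)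
        ≤ entCost μm μp c ε :=
  entCost_lower_bound_twisted_general Ωm Ωp hΩmo hΩpo μm μp hsm hsp hacm hacp hbdm hbdp c hc htwist
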